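/- Canonicity for λPRK: (1) if ⊢ t : P is derivable with empty typing context, then t reduces (in zero or more steps) to a canonical term; (2) if Γ ⊢ t : P with Γ classical and P strong, then either t →* t' with t' canonical, or t →* K[t'] where K is a case-context and t' is an open explosion; (3) if Γ ⊢ t : P with Γ and P classical, then either t →* λ±x.t' for some t', or t →* E[t'] where E is an eliminative context and t' is a variable or an open explosion. -/

import Mathlib

/-!
Canonicity for λPRK by a logical relation on possibly open terms.

The key point is that no well-typed explosion is closed. Fix a classical valuation of pure
propositions and read `A⁺`, `A⊕` as the truth of `A`, and `A⁻`, `A⊖` as its falsity. Every rule is sound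
for this reading, whereas the two arguments of an explosion have contradictory readings; so one of
the arguments has a free variable. Thus an explosion never has to be reduced: it already is an open
explosion, in the trivial context `□`, and the recursive equations `A⊕ ≅ A⊖ → A⁺`, `A⊖ ≅ A⊕ → A⁻`
require no fixed point in the relation.

The relation `Reducible P t` therefore says that `t`, if closed, is sound for the valuation, and
that `t` has a weak head form of the kind announced by canonicity (with components of canonical
terms of strong type again reducible at their classical types). `fundamental` shows that typable
terms are reducible under reducible substitutions; the identity substitution is reducible for a
classical context, which yields (2) and (3). Since reduction preserves closedness
(`Red.closedAt`), a closed term cannot reach the open alternatives, and (1) follows.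
-/

/-- Pure propositions: A ::= α | A∧B | A∨B | ¬A -/
inductive PureProp : Type
  | var : ℕ → PureProp
  | conj : PureProp → PureProp → PureProp
  | disj : PureProp → PureProp → PureProp
  | neg : PureProp → PureProp
  deriving DecidableEq

/-- Moded propositions: A⁺ (sp), A⁻ (sn), A⊕ (cp), A⊖ (cn). -/
inductive MProp : Type
  | sp : PureProp → MProp
  | sn : PureProp → MProp
  | cp : PureProp → MProp
  | cn : PureProp → MProp
  deriving DecidableEq

/-- The opposite P~: flips the sign, keeps the strength. -/
def MProp.opp : MProp → MProp
  | .sp A => .sn A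
  | .sn A => .sp A
  | .cp A => .cn A
  | .cn A => .cp A

def MProp.isStrong : MProp → Prop
  | .sp _ => True
  | .sn _ => True
  | .cp _ => False
  | .cn _ => False

def MProp.isClassical : MProp → Prop
  | .sp _ => False
  | .sn _ => False
  | .cp _ => True
  | .cn _ => True

inductive Sign : Type | pos | neg
  deriving DecidableEq

def Sign.flip : Sign → Sign
  | .pos => .neg
  | .neg => .pos

/-- Terms of λPRK, with de Bruijn indices for bound variables
    (a faithful rendering of terms modulo α-renaming). -/
inductive Tm : Type
  | var : ℕ → Tm
  | abs : MProp → Tm → Tm → Tm                    -- abs_P(t,s)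
  | pair : Sign → Tm → Tm → Tm                    -- ⟨t,s⟩±
  | proj : Sign → Bool → Tm → Tm                  -- πᵢ±(t), i encoded by a Bool
  | inj : Sign → Bool → Tm → Tm                   -- inᵢ±(t)
  | case : Sign → Tm → MProp → Tm → MProp → Tm → Tm  -- case±(t, x:P.s, y:Q.u)
  | negi : Sign → Tm → Tm                         -- ¬i±(t)
  | nege : Sign → Tm → Tm                         -- ¬e±(t)
  | lam : Sign → MProp → Tm → Tm                  -- λ±x:P.t
  | app : Sign → Tm → Tm → Tm                     -- t •± s
  deriving DecidableEq

/-- Shift free de Bruijn indices ≥ c up by d. -/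
def Tm.shift (d : ℕ) : ℕ → Tm → Tm
  | c, .var k => if k < c then .var k else .var (k + d)
  | c, .abs P t s => .abs P (Tm.shift d c t) (Tm.shift d c s)
  | c, .pair sg t s => .pair sg (Tm.shift d c t) (Tm.shift d c s)
  | c, .proj sg i t => .proj sg i (Tm.shift d c t)
  | c, .inj sg i t => .inj sg i (Tm.shift d c t)
  | c, .case sg t P s Q u =>
      .case sg (Tm.shift d c t) P (Tm.shift d (c+1) s) Q (Tm.shift d (c+1) u)
  | c, .negi sg t => .negi sg (Tm.shift d c t)
  | c, .nege sg t => .nege sg (Tm.shift d c t)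
  | c, .lam sg P t => .lam sg P (Tm.shift d (c+1) t)
  | c, .app sg t s => .app sg (Tm.shift d c t) (Tm.shift d c s)

/-- Capture-avoiding substitution t[j := s]. -/
def Tm.subst : Tm → ℕ → Tm → Tm
  | .var k, j, s => if k = j then s else if j < k then .var (k - 1) else .var k
  | .abs P t u, j, s => .abs P (Tm.subst t j s) (Tm.subst u j s)
  | .pair sg t u, j, s => .pair sg (Tm.subst t j s) (Tm.subst u j s)
  | .proj sg i t, j, s => .proj sg i (Tm.subst t j s)
  | .inj sg i t, j, s => .inj sg i (Tm.subst t j s)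
  | .case sg t P u Q v, j, s =>
      .case sg (Tm.subst t j s) P (Tm.subst u (j+1) (Tm.shift 1 0 s)) Q (Tm.subst v (j+1) (Tm.shift 1 0 s))
  | .negi sg t, j, s => .negi sg (Tm.subst t j s)
  | .nege sg t, j, s => .nege sg (Tm.subst t j s)
  | .lam sg P t, j, s => .lam sg P (Tm.subst t (j+1) (Tm.shift 1 0 s))
  | .app sg t u, j, s => .app sg (Tm.subst t j s) (Tm.subst u j s)

/-- abs'(t,s): for t of classical type of sign sg and s of the opposite classical type,
    abs'(t,s) = abs(t •sg s, s •(flip sg) t). -/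
def absE (Q : MProp) (sg : Sign) (t s : Tm) : Tm :=
  Tm.abs Q (Tm.app sg t s) (Tm.app sg.flip s t)

/-- One-step reduction of λPRK, closed under arbitrary contexts. -/
inductive Red : Tm → Tm → Prop
  | proj1 {sg t1 t2} : Red (.proj sg false (.pair sg t1 t2)) t1
  | proj2 {sg t1 t2} : Red (.proj sg true (.pair sg t1 t2)) t2
  | case1 {sg t P Q s1 s2} : Red (.case sg (.inj sg false t) P s1 Q s2) (Tm.subst s1 0 t)
  | case2 {sg t P Q s1 s2} : Red (.case sg (.inj sg true t) P s1 Q s2) (Tm.subst s2 0 t)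
  | negRed {sg t} : Red (.nege sg (.negi sg t)) t
  | beta {sg P t s} : Red (.app sg (.lam sg P t) s) (Tm.subst t 0 s)
  | absPairInj1 {Q sg t1 t2 s} :
      Red (.abs Q (.pair sg t1 t2) (.inj sg.flip false s)) (absE Q sg t1 s)
  | absPairInj2 {Q sg t1 t2 s} :
      Red (.abs Q (.pair sg t1 t2) (.inj sg.flip true s)) (absE Q sg t2 s)
  | absInjPair1 {Q sg t s1 s2} :
      Red (.abs Q (.inj sg false t) (.pair sg.flip s1 s2)) (absE Q sg t s1)
  | absInjPair2 {Q sg t s1 s2} :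
      Red (.abs Q (.inj sg true t) (.pair sg.flip s1 s2)) (absE Q sg t s2)
  | absNeg {Q sg t s} :
      Red (.abs Q (.negi sg t) (.negi sg.flip s)) (absE Q sg.flip t s)
  | absCL {Q t t' s} : Red t t' → Red (.abs Q t s) (.abs Q t' s)
  | absCR {Q t s s'} : Red s s' → Red (.abs Q t s) (.abs Q t s')
  | pairCL {sg t t' s} : Red t t' → Red (.pair sg t s) (.pair sg t' s)
  | pairCR {sg t s s'} : Red s s' → Red (.pair sg t s) (.pair sg t s')
  | projC {sg i t t'} : Red t t' → Red (.proj sg i t) (.proj sg i t')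
  | injC {sg i t t'} : Red t t' → Red (.inj sg i t) (.inj sg i t')
  | caseC1 {sg t t' P s Q u} : Red t t' → Red (.case sg t P s Q u) (.case sg t' P s Q u)
  | caseC2 {sg t P s s' Q u} : Red s s' → Red (.case sg t P s Q u) (.case sg t P s' Q u)
  | caseC3 {sg t P s Q u u'} : Red u u' → Red (.case sg t P s Q u) (.case sg t P s Q u')
  | negiC {sg t t'} : Red t t' → Red (.negi sg t) (.negi sg t')
  | negeC {sg t t'} : Red t t' → Red (.nege sg t) (.nege sg t')
  | lamC {sg P t t'} : Red t t' → Red (.lam sg P t) (.lam sg P t')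
  | appCL {sg t t' s} : Red t t' → Red (.app sg t s) (.app sg t' s)
  | appCR {sg t s s'} : Red s s' → Red (.app sg t s) (.app sg t s')

/-- Zero-or-more-step reduction. -/
def RedStar : Tm → Tm → Prop := Relation.ReflTransGen Red

/-- The λPRK typing judgment Γ ⊢ t : P.  Contexts are lists (de Bruijn). -/
inductive TJ : List MProp → Tm → MProp → Prop
  | var {Γ : List MProp} {n P} : Γ[n]? = some P → TJ Γ (.var n) P
  | absT {Γ t s P Q} : MProp.isStrong P → TJ Γ t P → TJ Γ s P.opp → TJ Γ (.abs Q t s) Q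
  | pairP {Γ t s A B} : TJ Γ t (MProp.cp A) → TJ Γ s (MProp.cp B) →
      TJ Γ (.pair .pos t s) (MProp.sp (PureProp.conj A B))
  | pairN {Γ t s A B} : TJ Γ t (MProp.cn A) → TJ Γ s (MProp.cn B) →
      TJ Γ (.pair .neg t s) (MProp.sn (PureProp.disj A B))
  | projP1 {Γ t A B} : TJ Γ t (MProp.sp (PureProp.conj A B)) → TJ Γ (.proj .pos false t) (MProp.cp A)
  | projP2 {Γ t A B} : TJ Γ t (MProp.sp (PureProp.conj A B)) → TJ Γ (.proj .pos true t) (MProp.cp B)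
  | projN1 {Γ t A B} : TJ Γ t (MProp.sn (PureProp.disj A B)) → TJ Γ (.proj .neg false t) (MProp.cn A)
  | projN2 {Γ t A B} : TJ Γ t (MProp.sn (PureProp.disj A B)) → TJ Γ (.proj .neg true t) (MProp.cn B)
  | injP1 {Γ t A B} : TJ Γ t (MProp.cp A) → TJ Γ (.inj .pos false t) (MProp.sp (PureProp.disj A B))
  | injP2 {Γ t A B} : TJ Γ t (MProp.cp B) → TJ Γ (.inj .pos true t) (MProp.sp (PureProp.disj A B))
  | injN1 {Γ t A B} : TJ Γ t (MProp.cn A) → TJ Γ (.inj .neg false t) (MProp.sn (PureProp.conj A B))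
  | injN2 {Γ t A B} : TJ Γ t (MProp.cn B) → TJ Γ (.inj .neg true t) (MProp.sn (PureProp.conj A B))
  | caseP {Γ t s u A B P} : TJ Γ t (MProp.sp (PureProp.disj A B)) →
      TJ (MProp.cp A :: Γ) s P → TJ (MProp.cp B :: Γ) u P →
      TJ Γ (.case .pos t (MProp.cp A) s (MProp.cp B) u) P
  | caseN {Γ t s u A B P} : TJ Γ t (MProp.sn (PureProp.conj A B)) →
      TJ (MProp.cn A :: Γ) s P → TJ (MProp.cn B :: Γ) u P →
      TJ Γ (.case .neg t (MProp.cn A) s (MProp.cn B) u) P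
  | negiP {Γ t A} : TJ Γ t (MProp.cn A) → TJ Γ (.negi .pos t) (MProp.sp (PureProp.neg A))
  | negiN {Γ t A} : TJ Γ t (MProp.cp A) → TJ Γ (.negi .neg t) (MProp.sn (PureProp.neg A))
  | negeP {Γ t A} : TJ Γ t (MProp.sp (PureProp.neg A)) → TJ Γ (.nege .pos t) (MProp.cn A)
  | negeN {Γ t A} : TJ Γ t (MProp.sn (PureProp.neg A)) → TJ Γ (.nege .neg t) (MProp.cp A)
  | lamP {Γ t A} : TJ (MProp.cn A :: Γ) t (MProp.sp A) → TJ Γ (.lam .pos (MProp.cn A) t) (MProp.cp A)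
  | lamN {Γ t A} : TJ (MProp.cp A :: Γ) t (MProp.sn A) → TJ Γ (.lam .neg (MProp.cp A) t) (MProp.cn A)
  | appP {Γ t s A} : TJ Γ t (MProp.cp A) → TJ Γ s (MProp.cn A) → TJ Γ (.app .pos t s) (MProp.sp A)
  | appN {Γ t s A} : TJ Γ t (MProp.cn A) → TJ Γ s (MProp.cp A) → TJ Γ (.app .neg t s) (MProp.sn A)

/-- Canonical terms: ⟨t,s⟩±, inᵢ±(t), ¬i±(t), λ±x.t. -/
def Tm.isCanonical : Tm → Prop
  | .pair _ _ _ => True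
  | .inj _ _ _ => True
  | .negi _ _ => True
  | .lam _ _ _ => True
  | _ => False

/-- Explosions: abs_P(t,s) or t •± s. -/
def Tm.isExplosion : Tm → Prop
  | .abs _ _ _ => True
  | .app _ _ _ => True
  | _ => False

/-- All free de Bruijn indices of t are < c. -/
def Tm.closedAt : ℕ → Tm → Prop
  | c, .var k => k < c
  | c, .abs _ t s => Tm.closedAt c t ∧ Tm.closedAt c s
  | c, .pair _ t s => Tm.closedAt c t ∧ Tm.closedAt c s
  | c, .proj _ _ t => Tm.closedAt c t
  | c, .inj _ _ t => Tm.closedAt c t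
  | c, .case _ t _ s _ u => Tm.closedAt c t ∧ Tm.closedAt (c+1) s ∧ Tm.closedAt (c+1) u
  | c, .negi _ t => Tm.closedAt c t
  | c, .nege _ t => Tm.closedAt c t
  | c, .lam _ _ t => Tm.closedAt (c+1) t
  | c, .app _ t s => Tm.closedAt c t ∧ Tm.closedAt c s

/-- A term is open if it has at least one free variable. -/
def Tm.isOpen (t : Tm) : Prop := ¬ Tm.closedAt 0 t

/-- Case-contexts K ::= □ | case±(K, x.t, y.s). -/
inductive CaseCtx : Type
  | hole : CaseCtx
  | case : Sign → CaseCtx → MProp → Tm → MProp → Tm → CaseCtx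

def CaseCtx.plug : CaseCtx → Tm → Tm
  | .hole, t => t
  | .case sg K P s Q u, t => Tm.case sg (K.plug t) P s Q u

/-- Eliminative contexts E ::= □ | πᵢ±(E) | case±(E, x.t, y.s) | ¬e±(E). -/
inductive ElimCtx : Type
  | hole : ElimCtx
  | proj : Sign → Bool → ElimCtx → ElimCtx
  | case : Sign → ElimCtx → MProp → Tm → MProp → Tm → ElimCtx
  | nege : Sign → ElimCtx → ElimCtx

def ElimCtx.plug : ElimCtx → Tm → Tm
  | .hole, t => t
  | .proj sg i E, t => Tm.proj sg i (E.plug t)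
  | .case sg E P s Q u, t => Tm.case sg (E.plug t) P s Q u
  | .nege sg E, t => Tm.nege sg (E.plug t)

/-! ### Simultaneous renaming and substitution -/

/-- Extends a renaming under one binder. -/
def upRen (f : ℕ → ℕ) : ℕ → ℕ
  | 0 => 0
  | n + 1 => f n + 1

/-- Simultaneous renaming of the free variables of a term. -/
def Tm.ren : (ℕ → ℕ) → Tm → Tm
  | f, .var k => .var (f k)
  | f, .abs P t s => .abs P (t.ren f) (s.ren f)
  | f, .pair sg t s => .pair sg (t.ren f) (s.ren f)
  | f, .proj sg i t => .proj sg i (t.ren f)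
  | f, .inj sg i t => .inj sg i (t.ren f)
  | f, .case sg t P s Q u => .case sg (t.ren f) P (s.ren (upRen f)) Q (u.ren (upRen f))
  | f, .negi sg t => .negi sg (t.ren f)
  | f, .nege sg t => .nege sg (t.ren f)
  | f, .lam sg P t => .lam sg P (t.ren (upRen f))
  | f, .app sg t s => .app sg (t.ren f) (s.ren f)

/-- Extends a substitution under one binder. -/
def upSub (σ : ℕ → Tm) : ℕ → Tm
  | 0 => .var 0
  | n + 1 => (σ n).ren Nat.succ

/-- Simultaneous substitution for the free variables of a term. -/
def Tm.sub : (ℕ → Tm) → Tm → Tm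
  | σ, .var k => σ k
  | σ, .abs P t s => .abs P (t.sub σ) (s.sub σ)
  | σ, .pair sg t s => .pair sg (t.sub σ) (s.sub σ)
  | σ, .proj sg i t => .proj sg i (t.sub σ)
  | σ, .inj sg i t => .inj sg i (t.sub σ)
  | σ, .case sg t P s Q u => .case sg (t.sub σ) P (s.sub (upSub σ)) Q (u.sub (upSub σ))
  | σ, .negi sg t => .negi sg (t.sub σ)
  | σ, .nege sg t => .nege sg (t.sub σ)
  | σ, .lam sg P t => .lam sg P (t.sub (upSub σ))
  | σ, .app sg t s => .app sg (t.sub σ) (s.sub σ)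

/-- The substitution sending index `0` to `a` and index `n + 1` to `σ n`. -/
def consSub (a : Tm) (σ : ℕ → Tm) : ℕ → Tm
  | 0 => a
  | n + 1 => σ n

theorem upSub_var : upSub Tm.var = Tm.var := by
  funext n; cases n <;> rfl

theorem Tm.sub_var (t : Tm) : t.sub Tm.var = t := by
  induction t <;> simp_all [Tm.sub, upSub_var]

theorem Tm.ren_ren (t : Tm) : ∀ f g : ℕ → ℕ, (t.ren f).ren g = t.ren (g ∘ f) := by
  have hup : ∀ f g : ℕ → ℕ, upRen g ∘ upRen f = upRen (g ∘ f) := by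
    intro f g; funext n; cases n <;> rfl
  induction t <;> simp_all [Tm.ren]

theorem Tm.sub_ren (t : Tm) : ∀ (f : ℕ → ℕ) (σ : ℕ → Tm), (t.ren f).sub σ = t.sub (σ ∘ f) := by
  have hup : ∀ (f : ℕ → ℕ) (σ : ℕ → Tm), upSub σ ∘ upRen f = upSub (σ ∘ f) := by
    intro f σ; funext n; cases n <;> rfl
  induction t <;> simp_all [Tm.ren, Tm.sub]

theorem Tm.ren_sub (t : Tm) : ∀ (σ : ℕ → Tm) (f : ℕ → ℕ),
    (t.sub σ).ren f = t.sub (fun n => (σ n).ren f) := by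
  have hup : ∀ (σ : ℕ → Tm) (f : ℕ → ℕ),
      (fun n => (upSub σ n).ren (upRen f)) = upSub (fun n => (σ n).ren f) := by
    intro σ f; funext n
    cases n with
    | zero => rfl
    | succ n => simp only [upSub, Tm.ren_ren]; rfl
  induction t <;> simp_all [Tm.ren, Tm.sub]

theorem Tm.sub_sub (t : Tm) : ∀ σ τ : ℕ → Tm,
    (t.sub σ).sub τ = t.sub (fun n => (σ n).sub τ) := by
  have hup : ∀ σ τ : ℕ → Tm,
      (fun n => (upSub σ n).sub (upSub τ)) = upSub (fun n => (σ n).sub τ) := by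
    intro σ τ; funext n
    cases n with
    | zero => rfl
    | succ n => simp only [upSub, Tm.sub_ren, Tm.ren_sub]; rfl
  induction t <;> simp_all [Tm.sub]

theorem Tm.shift_eq_ren (t : Tm) : ∀ c : ℕ,
    t.shift 1 c = t.ren (fun k => if k < c then k else k + 1) := by
  have hup : ∀ c : ℕ, upRen (fun k => if k < c then k else k + 1) =
      fun k => if k < c + 1 then k else k + 1 := by
    intro c; funext n
    cases n with
    | zero => simp [upRen]
    | succ n => simp only [upRen]; split_ifs <;> omega
  induction t <;> simp_all [Tm.ren, Tm.shift]
  intro c; split_ifs <;> rfl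

theorem Tm.shift_zero (t : Tm) : t.shift 1 0 = t.ren Nat.succ := by
  simp [Tm.shift_eq_ren]

theorem Tm.subst_eq_sub (t : Tm) : ∀ (j : ℕ) (s : Tm),
    t.subst j s = t.sub (fun k => if k = j then s else if j < k then .var (k - 1) else .var k) := by
  have hup : ∀ (j : ℕ) (s : Tm),
      upSub (fun k => if k = j then s else if j < k then .var (k - 1) else .var k) =
      fun k => if k = j + 1 then s.ren Nat.succ
        else if j + 1 < k then .var (k - 1) else .var k := by
    intro j s; funext n
    cases n with
    | zero => simp [upSub]
    | succ n =>
      simp only [upSub, Nat.add_right_cancel_iff, Nat.add_lt_add_iff_right]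
      split_ifs
      · rfl
      · simp only [Tm.ren, Tm.var.injEq]; omega
      · rfl
  induction t <;> simp_all [Tm.sub, Tm.subst, Tm.shift_zero]

theorem Tm.subst_zero (t s : Tm) : t.subst 0 s = t.sub (consSub s Tm.var) := by
  rw [Tm.subst_eq_sub]
  congr 1; funext n; cases n <;> simp [consSub]

theorem Tm.sub_upSub_subst (t a : Tm) (σ : ℕ → Tm) :
    (t.sub (upSub σ)).subst 0 a = t.sub (consSub a σ) := by
  rw [Tm.subst_zero, Tm.sub_sub]
  congr 1; funext n
  cases n with
  | zero => rfl
  | succ n =>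
    simp only [upSub, consSub, Tm.sub_ren]
    exact Tm.sub_var _

/-! ### Closedness -/

theorem Tm.closedAt_ren (t : Tm) : ∀ (c d : ℕ) (f : ℕ → ℕ), t.closedAt c →
    (∀ n < c, f n < d) → (t.ren f).closedAt d := by
  have hup : ∀ (c d : ℕ) (f : ℕ → ℕ), (∀ n < c, f n < d) →
      ∀ n < c + 1, upRen f n < d + 1 := by
    intro c d f h n hn
    cases n with
    | zero => simp [upRen]
    | succ n => simpa [upRen] using h n (by omega)
  induction t <;> simp only [Tm.ren, Tm.closedAt] <;> grind

theorem Tm.closedAt_sub (t : Tm) : ∀ (c d : ℕ) (σ : ℕ → Tm), t.closedAt c →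
    (∀ n < c, (σ n).closedAt d) → (t.sub σ).closedAt d := by
  have hup : ∀ (c d : ℕ) (σ : ℕ → Tm), (∀ n < c, (σ n).closedAt d) →
      ∀ n < c + 1, (upSub σ n).closedAt (d + 1) := by
    intro c d σ h n hn
    cases n with
    | zero => simp [upSub, Tm.closedAt]
    | succ n => exact Tm.closedAt_ren _ d _ _ (h n (by omega)) (fun _ h => Nat.succ_lt_succ h)
  induction t <;> simp only [Tm.sub, Tm.closedAt] <;> grind

theorem Tm.closedAt_subst {t s : Tm} {c : ℕ} (ht : t.closedAt (c + 1)) (hs : s.closedAt c) :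
    (t.subst 0 s).closedAt c := by
  rw [Tm.subst_zero]
  refine Tm.closedAt_sub _ _ _ _ ht fun n hn => ?_
  cases n with
  | zero => exact hs
  | succ n => simp only [consSub, Tm.closedAt]; omega

theorem Red.closedAt {t t' : Tm} (h : Red t t') : ∀ c, t.closedAt c → t'.closedAt c := by
  induction h <;> simp only [Tm.closedAt, absE] <;> grind [Tm.closedAt_subst]

theorem RedStar.closedAt {t t' : Tm} (h : RedStar t t') {c : ℕ} (ht : t.closedAt c) :
    t'.closedAt c := by
  induction h with
  | refl => exact ht
  | tail _ hr ih => exact hr.closedAt _ ih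

theorem TJ.closedAt {Γ : List MProp} {t : Tm} {P : MProp} (h : TJ Γ t P) :
    t.closedAt Γ.length := by
  induction h with
  | var h => exact (List.getElem?_eq_some_iff.mp h).1
  | _ => simp_all [Tm.closedAt]

theorem CaseCtx.closedAt_of_plug (K : CaseCtx) {t : Tm} {c : ℕ} (h : (K.plug t).closedAt c) :
    t.closedAt c := by
  induction K with
  | hole => exact h
  | case _ _ _ _ _ _ ih => exact ih h.1

theorem ElimCtx.closedAt_of_plug (E : ElimCtx) {t : Tm} {c : ℕ} (h : (E.plug t).closedAt c) :
    t.closedAt c := by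
  induction E with
  | hole => exact h
  | case _ _ _ _ _ _ ih => exact ih h.1
  | proj _ _ _ ih => exact ih h
  | nege _ _ ih => exact ih h

/-! ### Congruence of many-step reduction -/

theorem RedStar.proj {sg : Sign} {i : Bool} {t t' : Tm} (h : RedStar t t') :
    RedStar (.proj sg i t) (.proj sg i t') :=
  Relation.ReflTransGen.lift (Tm.proj sg i) (fun _ _ h => Red.projC h) _ _ h

theorem RedStar.nege {sg : Sign} {t t' : Tm} (h : RedStar t t') :
    RedStar (.nege sg t) (.nege sg t') :=
  Relation.ReflTransGen.lift (Tm.nege sg) (fun _ _ h => Red.negeC h) _ _ h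

theorem RedStar.case {sg : Sign} {P Q : MProp} {s u t t' : Tm} (h : RedStar t t') :
    RedStar (.case sg t P s Q u) (.case sg t' P s Q u) :=
  Relation.ReflTransGen.lift (fun t => Tm.case sg t P s Q u) (fun _ _ h => Red.caseC1 h) _ _ h

/-! ### The logical relation -/

/-- Classical truth of a pure proposition, all propositional variables being true. Any other
choice for the variables would do as well. -/
def PureProp.holds : PureProp → Prop
  | .var _ => True
  | .conj A B => A.holds ∧ B.holds
  | .disj A B => A.holds ∨ B.holds
  | .neg A => ¬ A.holds

/-- Classical truth of a moded proposition, forgetting its strength. -/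
def MProp.holds : MProp → Prop
  | .sp A => A.holds
  | .cp A => A.holds
  | .sn A => ¬ A.holds
  | .cn A => ¬ A.holds

theorem MProp.not_holds_opp {P : MProp} (h : P.holds) : ¬ P.opp.holds := by
  cases P <;> simp_all [MProp.holds, MProp.opp]

/-- `t` reduces to an open explosion under a case-context. -/
def CaseStuck (t : Tm) : Prop :=
  ∃ (K : CaseCtx) (t' : Tm), RedStar t (K.plug t') ∧ t'.isExplosion ∧ t'.isOpen

/-- `t` reduces to a variable or an open explosion under an eliminative context. -/
def ElimStuck (t : Tm) : Prop :=
  ∃ (E : ElimCtx) (t' : Tm), RedStar t (E.plug t') ∧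
    ((∃ n, t' = Tm.var n) ∨ (t'.isExplosion ∧ t'.isOpen))

/-- The weak head forms of terms of classical type. -/
def ClassicalForm (t : Tm) : Prop :=
  (∃ (sg : Sign) (Q : MProp) (u : Tm), RedStar t (Tm.lam sg Q u)) ∨ ElimStuck t

/-- Reducibility at a classical type `P`: soundness for the valuation if `t` is closed, and a weak
head form. Nothing is required of the body of a `λ`. -/
def ClassicalRed (P : MProp) (t : Tm) : Prop :=
  (t.closedAt 0 → P.holds) ∧ ClassicalForm t

/-- `t` reduces to an introduction form of the strong type `P` whose components are reducible.
There is none at atomic types, and classical types are not concerned. -/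
def StrongForm : MProp → Tm → Prop
  | .sp (.conj A B), t => ∃ a b, RedStar t (.pair .pos a b) ∧
      ClassicalRed (.cp A) a ∧ ClassicalRed (.cp B) b
  | .sn (.disj A B), t => ∃ a b, RedStar t (.pair .neg a b) ∧
      ClassicalRed (.cn A) a ∧ ClassicalRed (.cn B) b
  | .sp (.disj A B), t =>
      (∃ a, RedStar t (.inj .pos false a) ∧ ClassicalRed (.cp A) a) ∨
      (∃ b, RedStar t (.inj .pos true b) ∧ ClassicalRed (.cp B) b)
  | .sn (.conj A B), t =>
      (∃ a, RedStar t (.inj .neg false a) ∧ ClassicalRed (.cn A) a) ∨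
      (∃ b, RedStar t (.inj .neg true b) ∧ ClassicalRed (.cn B) b)
  | .sp (.neg A), t => ∃ a, RedStar t (.negi .pos a) ∧ ClassicalRed (.cn A) a
  | .sn (.neg A), t => ∃ a, RedStar t (.negi .neg a) ∧ ClassicalRed (.cp A) a
  | _, _ => False

/-- The weak head form required of a term of type `P`. -/
def HeadForm : MProp → Tm → Prop
  | .cp _, t => ClassicalForm t
  | .cn _, t => ClassicalForm t
  | .sp A, t => CaseStuck t ∨ StrongForm (.sp A) t
  | .sn A, t => CaseStuck t ∨ StrongForm (.sn A) t

/-- Reducibility of a possibly open term at the type `P`. -/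
def Reducible (P : MProp) (t : Tm) : Prop :=
  (t.closedAt 0 → P.holds) ∧ HeadForm P t

theorem CaseStuck.expand {t t' : Tm} (h : RedStar t t') : CaseStuck t' → CaseStuck t :=
  fun ⟨K, u, hr, hu⟩ => ⟨K, u, Relation.ReflTransGen.trans h hr, hu⟩

theorem ElimStuck.expand {t t' : Tm} (h : RedStar t t') : ElimStuck t' → ElimStuck t :=
  fun ⟨E, u, hr, hu⟩ => ⟨E, u, Relation.ReflTransGen.trans h hr, hu⟩

theorem ClassicalForm.expand {t t' : Tm} (h : RedStar t t') :
    ClassicalForm t' → ClassicalForm t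
  | .inl ⟨sg, Q, u, hr⟩ => .inl ⟨sg, Q, u, Relation.ReflTransGen.trans h hr⟩
  | .inr he => .inr (he.expand h)

theorem StrongForm.expand {P : MProp} {t t' : Tm} (h : RedStar t t') (hs : StrongForm P t') :
    StrongForm P t := by
  have tr : ∀ u, RedStar t' u → RedStar t u := fun u hu => Relation.ReflTransGen.trans h hu
  rcases P with (_ | _ | _ | _) | (_ | _ | _ | _) | _ | _ <;> simp only [StrongForm] at hs ⊢ <;>
    grind

theorem HeadForm.expand {P : MProp} {t t' : Tm} (h : RedStar t t') (hs : HeadForm P t') :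
    HeadForm P t := by
  cases P with
  | sp A => exact hs.imp (CaseStuck.expand h) (StrongForm.expand h)
  | sn A => exact hs.imp (CaseStuck.expand h) (StrongForm.expand h)
  | cp A => exact ClassicalForm.expand h hs
  | cn A => exact ClassicalForm.expand h hs

/-- The eliminative context with the same frames as a case-context. -/
def CaseCtx.toElim : CaseCtx → ElimCtx
  | .hole => .hole
  | .case sg K P s Q u => .case sg K.toElim P s Q u

theorem CaseCtx.plug_toElim (K : CaseCtx) (t : Tm) : K.toElim.plug t = K.plug t := by
  induction K <;> simp_all [CaseCtx.toElim, CaseCtx.plug, ElimCtx.plug]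

theorem CaseStuck.elimStuck {t : Tm} : CaseStuck t → ElimStuck t :=
  fun ⟨K, u, hr, hu⟩ => ⟨K.toElim, u, by rwa [CaseCtx.plug_toElim], .inr hu⟩

theorem CaseStuck.headForm {P : MProp} {t : Tm} (h : CaseStuck t) : HeadForm P t := by
  cases P with
  | sp A => exact .inl h
  | sn A => exact .inl h
  | cp A => exact .inr h.elimStuck
  | cn A => exact .inr h.elimStuck

theorem CaseStuck.case {sg : Sign} {t s u : Tm} {P Q : MProp} :
    CaseStuck t → CaseStuck (.case sg t P s Q u) :=
  fun ⟨K, v, hr, hv⟩ => ⟨.case sg K P s Q u, v, hr.case, hv⟩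

theorem ElimStuck.proj {sg : Sign} {i : Bool} {t : Tm} : ElimStuck t → ElimStuck (.proj sg i t) :=
  fun ⟨E, v, hr, hv⟩ => ⟨.proj sg i E, v, hr.proj, hv⟩

theorem ElimStuck.nege {sg : Sign} {t : Tm} : ElimStuck t → ElimStuck (.nege sg t) :=
  fun ⟨E, v, hr, hv⟩ => ⟨.nege sg E, v, hr.nege, hv⟩

theorem headForm_of_explosion {P : MProp} {t : Tm} (he : t.isExplosion) (ho : t.isOpen) :
    HeadForm P t :=
  CaseStuck.headForm ⟨.hole, t, .refl, he, ho⟩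

/-! ### The fundamental lemma -/

/-- Every true classical type has a closed reducible term, here `λx.x`. It is plugged in for a
bound variable in order to read off soundness of the body of a binder. -/
theorem exists_closed_reducible {P : MProp} (hP : P.isClassical) (h : P.holds) :
    ∃ a : Tm, a.closedAt 0 ∧ Reducible P a := by
  refine ⟨.lam .pos P (.var 0), by simp [Tm.closedAt], fun _ => h, ?_⟩
  cases P with
  | sp A => exact hP.elim
  | sn A => exact hP.elim
  | cp A => exact .inl ⟨_, _, _, .refl⟩
  | cn A => exact .inl ⟨_, _, _, .refl⟩

/-- Soundness under a binder of true classical type, when the body is reducible under every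
reducible instantiation of the bound variable. -/
theorem holds_of_body {P Q : MProp} {t : Tm} {σ : ℕ → Tm} (hP : P.isClassical) (h : P.holds)
    (ih : ∀ a, Reducible P a → Reducible Q (t.sub (consSub a σ)))
    (hc : (t.sub (upSub σ)).closedAt 1) : Q.holds := by
  obtain ⟨a, ha, hr⟩ := exists_closed_reducible hP h
  apply (ih a hr).1
  rw [← Tm.sub_upSub_subst]
  exact Tm.closedAt_subst hc ha

theorem Reducible.cons {Γ : List MProp} {σ : ℕ → Tm} {P : MProp} {a : Tm}
    (hσ : ∀ n Q, Γ[n]? = some Q → Reducible Q (σ n)) (ha : Reducible P a) :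
    ∀ n Q, (P :: Γ)[n]? = some Q → Reducible Q (consSub a σ n) := by
  intro n Q h
  cases n with
  | zero => simp at h; exact h ▸ ha
  | succ n => exact hσ n Q (by simpa using h)

/-- A case analysis reduces to the chosen branch, instantiated as in the fundamental lemma. -/
theorem headForm_case {P P₁ P₂ : MProp} {sg : Sign} {t s u a : Tm} {σ : ℕ → Tm} {i : Bool}
    (hr : RedStar t (.inj sg i a))
    (h : HeadForm P ((if i then u else s).sub (consSub a σ))) :
    HeadForm P (.case sg t P₁ (s.sub (upSub σ)) P₂ (u.sub (upSub σ))) := by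
  refine HeadForm.expand (Relation.ReflTransGen.tail hr.case ?_) h
  cases i
  · simpa [← Tm.sub_upSub_subst] using Red.case1
  · simpa [← Tm.sub_upSub_subst] using Red.case2

/-- Typable terms are reducible under reducible substitutions. -/
theorem fundamental {Γ : List MProp} {t : Tm} {P : MProp} (h : TJ Γ t P) :
    ∀ σ : ℕ → Tm, (∀ n Q, Γ[n]? = some Q → Reducible Q (σ n)) → Reducible P (t.sub σ) := by
  induction h with
  | var h => exact fun σ hσ => hσ _ _ h
  | @absT Γ t s P Q _ _ _ iht ihs =>
    intro σ hσ
    have hopen : ¬ Tm.closedAt 0 (Tm.sub σ (.abs Q t s)) := fun hc =>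
      MProp.not_holds_opp ((iht σ hσ).1 hc.1) ((ihs σ hσ).1 hc.2)
    exact ⟨fun hc => (hopen hc).elim, headForm_of_explosion trivial hopen⟩
  | @appP Γ t s A _ _ iht ihs =>
    intro σ hσ
    have hopen : ¬ Tm.closedAt 0 (Tm.sub σ (.app .pos t s)) := fun hc =>
      (ihs σ hσ).1 hc.2 ((iht σ hσ).1 hc.1)
    exact ⟨fun hc => (hopen hc).elim, headForm_of_explosion trivial hopen⟩
  | @appN Γ t s A _ _ iht ihs =>
    intro σ hσ
    have hopen : ¬ Tm.closedAt 0 (Tm.sub σ (.app .neg t s)) := fun hc =>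
      (iht σ hσ).1 hc.1 ((ihs σ hσ).1 hc.2)
    exact ⟨fun hc => (hopen hc).elim, headForm_of_explosion trivial hopen⟩
  | pairP _ _ iht ihs =>
    exact fun σ hσ => ⟨fun hc => ⟨(iht σ hσ).1 hc.1, (ihs σ hσ).1 hc.2⟩,
      .inr ⟨_, _, .refl, iht σ hσ, ihs σ hσ⟩⟩
  | pairN _ _ iht ihs =>
    exact fun σ hσ => ⟨fun hc => not_or.mpr ⟨(iht σ hσ).1 hc.1, (ihs σ hσ).1 hc.2⟩,
      .inr ⟨_, _, .refl, iht σ hσ, ihs σ hσ⟩⟩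
  | injP1 _ ih =>
    exact fun σ hσ => ⟨fun hc => .inl ((ih σ hσ).1 hc), .inr (.inl ⟨_, .refl, ih σ hσ⟩)⟩
  | injP2 _ ih =>
    exact fun σ hσ => ⟨fun hc => .inr ((ih σ hσ).1 hc), .inr (.inr ⟨_, .refl, ih σ hσ⟩)⟩
  | injN1 _ ih =>
    exact fun σ hσ => ⟨fun hc hA => (ih σ hσ).1 hc hA.1, .inr (.inl ⟨_, .refl, ih σ hσ⟩)⟩
  | injN2 _ ih =>
    exact fun σ hσ => ⟨fun hc hA => (ih σ hσ).1 hc hA.2, .inr (.inr ⟨_, .refl, ih σ hσ⟩)⟩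
  | negiP _ ih =>
    exact fun σ hσ => ⟨fun hc => (ih σ hσ).1 hc, .inr ⟨_, .refl, ih σ hσ⟩⟩
  | negiN _ ih =>
    exact fun σ hσ => ⟨fun hc hA => hA ((ih σ hσ).1 hc), .inr ⟨_, .refl, ih σ hσ⟩⟩
  | projP1 _ ih =>
    intro σ hσ
    refine ⟨fun hc => ((ih σ hσ).1 hc).1, ?_⟩
    obtain hk | ⟨a, b, hr, ha, hb⟩ := (ih σ hσ).2
    · exact .inr hk.elimStuck.proj
    · exact HeadForm.expand (.tail hr.proj .proj1) ha.2
  | projP2 _ ih =>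
    intro σ hσ
    refine ⟨fun hc => ((ih σ hσ).1 hc).2, ?_⟩
    obtain hk | ⟨a, b, hr, ha, hb⟩ := (ih σ hσ).2
    · exact .inr hk.elimStuck.proj
    · exact HeadForm.expand (.tail hr.proj .proj2) hb.2
  | projN1 _ ih =>
    intro σ hσ
    refine ⟨fun hc hA => (ih σ hσ).1 hc (.inl hA), ?_⟩
    obtain hk | ⟨a, b, hr, ha, hb⟩ := (ih σ hσ).2
    · exact .inr hk.elimStuck.proj
    · exact HeadForm.expand (.tail hr.proj .proj1) ha.2
  | projN2 _ ih =>
    intro σ hσ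
    refine ⟨fun hc hA => (ih σ hσ).1 hc (.inr hA), ?_⟩
    obtain hk | ⟨a, b, hr, ha, hb⟩ := (ih σ hσ).2
    · exact .inr hk.elimStuck.proj
    · exact HeadForm.expand (.tail hr.proj .proj2) hb.2
  | negeP _ ih =>
    intro σ hσ
    refine ⟨fun hc => (ih σ hσ).1 hc, ?_⟩
    obtain hk | ⟨a, hr, ha⟩ := (ih σ hσ).2
    · exact .inr hk.elimStuck.nege
    · exact HeadForm.expand (.tail hr.nege .negRed) ha.2
  | negeN _ ih =>
    intro σ hσ
    refine ⟨fun hc => not_not.mp ((ih σ hσ).1 hc), ?_⟩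
    obtain hk | ⟨a, hr, ha⟩ := (ih σ hσ).2
    · exact .inr hk.elimStuck.nege
    · exact HeadForm.expand (.tail hr.nege .negRed) ha.2
  | @lamP Γ t A _ ih =>
    intro σ hσ
    refine ⟨fun hc => ?_, .inl ⟨_, _, _, .refl⟩⟩
    by_contra hA
    exact hA (holds_of_body (P := .cn A) (Q := .sp A) trivial hA
      (fun a ha => ih _ (Reducible.cons hσ ha)) hc)
  | @lamN Γ t A _ ih =>
    intro σ hσ
    refine ⟨fun hc hA => ?_, .inl ⟨_, _, _, .refl⟩⟩
    exact holds_of_body (P := .cp A) (Q := .sn A) trivial hA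
      (fun a ha => ih _ (Reducible.cons hσ ha)) hc hA
  | @caseP Γ t s u A B P _ _ _ iht ihs ihu =>
    intro σ hσ
    have hs := fun a ha => ihs (consSub a σ) (Reducible.cons hσ ha)
    have hu := fun a ha => ihu (consSub a σ) (Reducible.cons hσ ha)
    refine ⟨fun hc => ?_, ?_⟩
    · obtain hA | hB := (iht σ hσ).1 hc.1
      · exact holds_of_body (P := .cp A) trivial hA hs hc.2.1
      · exact holds_of_body (P := .cp B) trivial hB hu hc.2.2
    · obtain hk | ⟨a, hr, ha⟩ | ⟨b, hr, hb⟩ := (iht σ hσ).2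
      · exact hk.case.headForm
      · exact headForm_case hr (hs a ha).2
      · exact headForm_case hr (hu b hb).2
  | @caseN Γ t s u A B P _ _ _ iht ihs ihu =>
    intro σ hσ
    have hs := fun a ha => ihs (consSub a σ) (Reducible.cons hσ ha)
    have hu := fun a ha => ihu (consSub a σ) (Reducible.cons hσ ha)
    refine ⟨fun hc => ?_, ?_⟩
    · obtain hA | hB := not_and_or.mp ((iht σ hσ).1 hc.1)
      · exact holds_of_body (P := .cn A) trivial hA hs hc.2.1
      · exact holds_of_body (P := .cn B) trivial hB hu hc.2.2
    · obtain hk | ⟨a, hr, ha⟩ | ⟨b, hr, hb⟩ := (iht σ hσ).2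
      · exact hk.case.headForm
      · exact headForm_case hr (hs a ha).2
      · exact headForm_case hr (hu b hb).2

/-- In a classical context the identity substitution is reducible, variables being stuck. -/
theorem headForm_of_typed {Γ : List MProp} {t : Tm} {P : MProp}
    (hΓ : ∀ Q ∈ Γ, MProp.isClassical Q) (h : TJ Γ t P) : HeadForm P t := by
  have key := fundamental h Tm.var fun n Q hQ => by
    refine ⟨fun hc => (Nat.not_lt_zero _ hc).elim, ?_⟩
    have hcl := hΓ Q (List.mem_of_getElem? hQ)
    have hst : ElimStuck (.var n) := ⟨.hole, _, .refl, .inl ⟨n, rfl⟩⟩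
    cases Q with
    | sp A => exact hcl.elim
    | sn A => exact hcl.elim
    | cp A => exact .inr hst
    | cn A => exact .inr hst
  rw [Tm.sub_var] at key
  exact key.2

theorem StrongForm.canonical {P : MProp} {t : Tm} (h : StrongForm P t) :
    ∃ t', RedStar t t' ∧ Tm.isCanonical t' := by
  rcases P with (_ | _ | _ | _) | (_ | _ | _ | _) | _ | _ <;> simp only [StrongForm] at h
  · obtain ⟨a, b, hr, _⟩ := h
    exact ⟨_, hr, trivial⟩
  · obtain ⟨a, hr, _⟩ | ⟨a, hr, _⟩ := h <;> exact ⟨_, hr, trivial⟩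
  · obtain ⟨a, hr, _⟩ := h
    exact ⟨_, hr, trivial⟩
  · obtain ⟨a, hr, _⟩ | ⟨a, hr, _⟩ := h <;> exact ⟨_, hr, trivial⟩
  · obtain ⟨a, b, hr, _⟩ := h
    exact ⟨_, hr, trivial⟩
  · obtain ⟨a, hr, _⟩ := h
    exact ⟨_, hr, trivial⟩

theorem not_elimStuck_of_closed {t : Tm} (hc : t.closedAt 0) : ¬ ElimStuck t := by
  rintro ⟨E, t', hr, ht'⟩
  have h := E.closedAt_of_plug (RedStar.closedAt hr hc)
  obtain ⟨n, rfl⟩ | ⟨_, ho⟩ := ht'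
  · exact Nat.not_lt_zero _ h
  · exact ho h

/-- Canonicity for λPRK. -/
theorem canonicity :
    (∀ (t : Tm) (P : MProp), TJ [] t P →
      ∃ t', RedStar t t' ∧ Tm.isCanonical t') ∧
    (∀ (Γ : List MProp) (t : Tm) (P : MProp),
      (∀ Q ∈ Γ, MProp.isClassical Q) → MProp.isStrong P → TJ Γ t P →
      (∃ t', RedStar t t' ∧ Tm.isCanonical t') ∨
      (∃ (K : CaseCtx) (t' : Tm), RedStar t (K.plug t') ∧ Tm.isExplosion t' ∧ Tm.isOpen t')) ∧
    (∀ (Γ : List MProp) (t : Tm) (P : MProp),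
      (∀ Q ∈ Γ, MProp.isClassical Q) → MProp.isClassical P → TJ Γ t P →
      (∃ (sg : Sign) (Q : MProp) (u : Tm), RedStar t (Tm.lam sg Q u)) ∨
      (∃ (E : ElimCtx) (t' : Tm), RedStar t (E.plug t') ∧
        ((∃ n, t' = Tm.var n) ∨ (Tm.isExplosion t' ∧ Tm.isOpen t')))) := by
  have strong : ∀ (Γ : List MProp) (t : Tm) (P : MProp), (∀ Q ∈ Γ, MProp.isClassical Q) →
      MProp.isStrong P → TJ Γ t P →
      (∃ t', RedStar t t' ∧ Tm.isCanonical t') ∨ CaseStuck t := by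
    intro Γ t P hΓ hP h
    have hf := headForm_of_typed hΓ h
    cases P with
    | sp A => exact hf.symm.imp_left StrongForm.canonical
    | sn A => exact hf.symm.imp_left StrongForm.canonical
    | cp A => exact hP.elim
    | cn A => exact hP.elim
  have classical : ∀ (Γ : List MProp) (t : Tm) (P : MProp), (∀ Q ∈ Γ, MProp.isClassical Q) →
      MProp.isClassical P → TJ Γ t P → ClassicalForm t := by
    intro Γ t P hΓ hP h
    have hf := headForm_of_typed hΓ h
    cases P with
    | sp A => exact hP.elim
    | sn A => exact hP.elim
    | cp A => exact hf
    | cn A => exact hf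
  refine ⟨fun t P h => ?_, strong, classical⟩
  have hst := not_elimStuck_of_closed (t := t) h.closedAt
  have hP : P.isStrong ∨ P.isClassical := by
    cases P <;> simp [MProp.isStrong, MProp.isClassical]
  obtain hP | hP := hP
  · exact (strong [] t P (by simp) hP h).resolve_right fun hk => hst hk.elimStuck
  · obtain ⟨sg, Q, u, hr⟩ := (classical [] t P (by simp) hP h).resolve_right hst
    exact ⟨_, hr, trivial⟩
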